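/- For integers m, n, k, p with m, n ≥ 0, 0 ≤ k ≤ min(m, n), and k ≤ p ≤ m+n−k, one has Σ_{i+j=p, 0≤i≤m, 0≤j≤n} c_{m,n,k}(i, j) · c_{m,n,k}(m−i, n−j) = (-1)^k · D(m, n, k); in particular this sum is independent of p. -/

import Mathlib

/-!
Put `a = m - k`, `b = n - k`, `N = a + b`, and let
`H = ∑_{l ≤ k} (-1)^l C(k-l+a, a) C(b+l, b) X^l` (`weightPoly`). Then `c_{m,n,k}(i, p-i)` is the
coefficient of `X^i` in `(1+X)^(p-k) H` (`c_eq_coeff`), so the pairing sum is the coefficient of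
`X^m` in `(1+X)^(p-k) H · (1+X)^(m+n-k-p) H = (1+X)^N H²`, which does not involve `p`.

To evaluate it, write the product as `H · ((1+X)^N H)`. For `s ≤ k` the coefficient of `X^(m-s)` in
`(1+X)^N H` is an `N`-th finite difference of the degree `N` polynomial `C(s+r, a) C(k-s+N-r, b)`
in `r`, hence up to sign it is the constant `C(N, a)` (`alternating_sum`, `coeff_top`). The signs
cancel those of `H`, and what remains is the Vandermonde-type sum
`∑_{l ≤ k} C(k-l+a, a) C(b+l, b) = C(a+b+k+1, k)` (`vandermonde_neg`).
-/

/-- Binomial coefficient for integer arguments: `C a b = a.choose b` when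
`0 ≤ b ≤ a`, and `0` otherwise. -/
def C (a b : ℤ) : ℤ := if 0 ≤ b ∧ b ≤ a then (a.toNat.choose b.toNat : ℤ) else 0

/-- The coordinate function `c_{m,n,k}(i,j)`. -/
def c (m n k i j : ℤ) : ℤ :=
  ∑ l ∈ Finset.range (k.toNat + 1),
    (-1 : ℤ) ^ l * C (i + j - k) (i - l) * C (m - l) (k - l) * C (n - k + l) l

/-- The normalizing factor `D(m,n,k)`. -/
def D (m n k : ℤ) : ℤ := C (m + n - k + 1) k * C (m + n - 2 * k) (m - k)

/-- The `N`-th finite difference, `N = a + b`, of a product of binomial coefficients of total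
degree `N`; by Pascal's rule the sum satisfies the recursion of `(-1)^a * N.choose a`. -/
lemma alternating_sum (N : ℕ) : ∀ a b u w : ℕ, a + b = N →
    ∑ x ∈ Finset.HasAntidiagonal.antidiagonal N,
      (N.choose x.1 : ℤ) * ((-1) ^ x.1 * ((u + x.1).choose a : ℤ) * ((w + x.2).choose b : ℤ)) =
    (-1) ^ a * (N.choose a : ℤ) := by
  induction N with
  | zero =>
    intro a b u w h
    obtain ⟨rfl, rfl⟩ : a = 0 ∧ b = 0 := by omega
    simp
  | succ N ih =>
    intro a b u w h
    rw [Finset.sum_antidiagonal_choose_succ_mul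
      (fun i j => (-1 : ℤ) ^ i * ((u + i).choose a : ℤ) * ((w + j).choose b : ℤ)) N]
    have hsym : ∀ x ∈ Finset.HasAntidiagonal.antidiagonal N, N.choose x.2 = N.choose x.1 := by
      intro x hx
      rw [Finset.HasAntidiagonal.mem_antidiagonal] at hx
      exact Nat.choose_symm_of_eq_add (by omega)
    rw [Finset.sum_congr rfl (fun x hx => by rw [hsym x hx]) (s₂ := Finset.HasAntidiagonal.antidiagonal N)
      (f := fun x => (N.choose x.2 : ℤ) * _), ← Finset.sum_add_distrib]
    rcases a with _ | a
    · obtain rfl : b = N + 1 := by omega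
      have h1 := ih 0 N u w (by omega)
      simp only [Nat.choose_zero_right] at h1 ⊢
      rw [← h1]
      refine Finset.sum_congr rfl fun x _ => ?_
      rw [← add_assoc w, Nat.choose_succ_succ]
      push_cast
      ring
    · rcases b with _ | b
      · obtain rfl : a = N := by omega
        have h1 := ih a 0 u w (by omega)
        simp only [Nat.choose_zero_right, Nat.choose_self] at h1 ⊢
        rw [pow_succ, mul_assoc, mul_comm (-1 : ℤ), ← mul_assoc, ← h1, Finset.sum_mul]
        refine Finset.sum_congr rfl fun x _ => ?_
        rw [← add_assoc u, Nat.choose_succ_succ (u + x.1)]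
        push_cast
        ring
      · have h1 := ih (a + 1) b u w (by omega)
        have h2 := ih a (b + 1) u w (by omega)
        rw [Nat.choose_succ_succ N a]
        push_cast
        have : (-1 : ℤ) ^ (a + 1) * ((N.choose a : ℤ) + (N.choose (a + 1) : ℤ)) =
          (-1) ^ (a + 1) * (N.choose (a + 1) : ℤ) - (-1) ^ a * (N.choose a : ℤ) := by ring
        rw [this, ← h1, ← h2, ← Finset.sum_sub_distrib]
        refine Finset.sum_congr rfl fun x _ => ?_
        rw [← add_assoc w, ← add_assoc u, Nat.choose_succ_succ (u + x.1),
          Nat.choose_succ_succ (w + x.2)]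
        push_cast
        ring

/-- The coefficient of `X^k` in `(1-X)^(-(a+1)) * (1-X)^(-(b+1)) = (1-X)^(-(a+b+2))`. -/
lemma vandermonde_neg (a b k : ℕ) :
    ∑ l ∈ Finset.range (k + 1), ((k - l + a).choose a : ℤ) * ((b + l).choose b : ℤ) =
      ((a + b + k + 1).choose k : ℤ) := by
  have h := PowerSeries.invOneSubPow_add (S := ℤ) (b + 1) (a + 1)
  have h2 := congrArg (fun z => PowerSeries.coeff k (Units.val z)) h
  rw [show b + 1 + (a + 1) = (a + b + 1) + 1 by ring] at h2
  simp only [Units.val_mul, PowerSeries.invOneSubPow_val_succ_eq_mk_add_choose,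
    PowerSeries.coeff_mul, PowerSeries.coeff_mk] at h2
  rw [Finset.Nat.sum_antidiagonal_eq_sum_range_succ
    (fun i j => ((b + i).choose b : ℤ) * ((a + j).choose a : ℤ))] at h2
  rw [Nat.choose_symm_of_eq_add (show a + b + k + 1 = k + (a + b + 1) by ring),
    show a + b + k + 1 = a + b + 1 + k by ring, h2]
  refine Finset.sum_congr rfl fun l _ => ?_
  rw [mul_comm, add_comm a]

/-- The coefficient of `X^l`, `l ≤ k`, in `weightPoly k a b`. -/
def weightCoeff (k a b l : ℕ) : ℤ :=
  (-1) ^ l * ((k - l + a).choose a : ℤ) * ((b + l).choose b : ℤ)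

/-- The polynomial whose coefficient of `X^i` is `c_{k+a,k+b,k}(i, k-i)`, written `H` below. -/
noncomputable def weightPoly (k a b : ℕ) : Polynomial ℤ :=
  ∑ l ∈ Finset.range (k + 1), Polynomial.C (weightCoeff k a b l) * Polynomial.X ^ l

lemma coeff_weightPoly_mul (k a b j : ℕ) (P : Polynomial ℤ) :
    (weightPoly k a b * P).coeff j =
      ∑ l ∈ Finset.range (k + 1), weightCoeff k a b l * if l ≤ j then P.coeff (j - l) else 0 := by
  simp only [weightPoly, Finset.sum_mul, Polynomial.finsetSum_coeff, mul_assoc,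
    Polynomial.coeff_C_mul, Polynomial.coeff_X_pow_mul']

lemma C_natCast (a b : ℕ) : C a b = (a.choose b : ℤ) := by
  unfold C
  split_ifs with h
  · simp
  · rw [Nat.choose_eq_zero_of_lt (by omega)]
    simp

lemma c_eq_coeff (k a b q i : ℕ) (m n p : ℤ) (hm : m = k + a) (hn : n = k + b) (hp : p = k + q) :
    c m n k i (p - i) = (weightPoly k a b * (1 + Polynomial.X) ^ q).coeff i := by
  subst hm hn hp
  rw [coeff_weightPoly_mul]
  unfold c
  rw [Int.toNat_natCast]
  refine Finset.sum_congr rfl fun l hl => ?_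
  have hl' : l ≤ k := by simpa [Nat.lt_succ_iff] using hl
  have e1 : C ((k : ℤ) + a - l) (k - l) = ((k - l + a).choose a : ℤ) := by
    rw [show (k : ℤ) + a - l = ((k - l + a : ℕ) : ℤ) by omega,
      show (k : ℤ) - l = ((k - l : ℕ) : ℤ) by omega, C_natCast, Nat.choose_symm_add]
  have e2 : C ((k : ℤ) + b - k + l) l = ((b + l).choose b : ℤ) := by
    rw [show (k : ℤ) + b - k + l = ((b + l : ℕ) : ℤ) by omega, C_natCast, Nat.choose_symm_add]
  have e3 : C ((i : ℤ) + (k + q - i) - k) (i - l) =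
      if l ≤ i then ((1 + Polynomial.X : Polynomial ℤ) ^ q).coeff (i - l) else 0 := by
    split_ifs with h
    · rw [show (i : ℤ) + (k + q - i) - k = (q : ℤ) by ring,
        show (i : ℤ) - l = ((i - l : ℕ) : ℤ) by omega, C_natCast,
        Polynomial.coeff_one_add_X_pow]
    · unfold C
      rw [if_neg (by omega)]
  rw [e1, e2, e3, weightCoeff]
  ring

/-- The coefficients of `(1+X)^(a+b) H` in degrees `a, …, a + k = m` agree up to alternating
signs. -/
lemma coeff_top (k a b s : ℕ) (hs : s ≤ k) :
    (weightPoly k a b * (1 + Polynomial.X) ^ (a + b)).coeff (k + a - s) =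
      (-1) ^ (k - s) * ((a + b).choose a : ℤ) := by
  have hB := alternating_sum (a + b) a b s (k - s) rfl
  have hsign : (-1 : ℤ) ^ (k - s) = (-1) ^ (k + a - s) * (-1) ^ a := by
    rw [show k + a - s = (k - s) + a by omega, pow_add, mul_assoc, ← mul_pow]
    simp
  rw [hsign, mul_assoc, ← hB, coeff_weightPoly_mul, Finset.Nat.sum_antidiagonal_eq_sum_range_succ
    (fun i j => ((a + b).choose i : ℤ) *
      ((-1) ^ i * ((s + i).choose a : ℤ) * ((k - s + j).choose b : ℤ))), Finset.mul_sum]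
  simp only [Polynomial.coeff_one_add_X_pow]
  -- Substitute `r = k + a - s - l`; terms with no counterpart contain a vanishing binomial.
  refine Finset.sum_bij_ne_zero (fun l _ _ => k + a - s - l) ?_ ?_ ?_ ?_
  · intro l hl h0
    rw [Finset.mem_range]
    by_contra hlt
    apply h0
    rw [Nat.choose_eq_zero_of_lt (by omega)]
    simp
  · intro l hl h0 l' hl' h0' h
    have h1 : l ≤ k + a - s := by
      by_contra hlt
      exact h0 (by rw [if_neg hlt, mul_zero])
    have h2 : l' ≤ k + a - s := by
      by_contra hlt
      exact h0' (by rw [if_neg hlt, mul_zero])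
    omega
  · intro r hr h0
    rw [Finset.mem_range] at hr
    have h1 : a ≤ s + r := by
      by_contra hlt
      apply h0
      rw [Nat.choose_eq_zero_of_lt (show s + r < a by omega)]
      simp
    have h2 : b ≤ k - s + (a + b - r) := by
      by_contra hlt
      apply h0
      rw [Nat.choose_eq_zero_of_lt (show k - s + (a + b - r) < b by omega)]
      simp
    refine ⟨k + a - s - r, by rw [Finset.mem_range]; omega, ?_, by omega⟩
    rw [if_pos (by omega), weightCoeff]
    have c1 := Nat.choose_pos (show a ≤ k - (k + a - s - r) + a by omega)
    have c2 := Nat.choose_pos (show b ≤ b + (k + a - s - r) by omega)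
    have c3 := Nat.choose_pos (show k + a - s - (k + a - s - r) ≤ a + b by omega)
    have c4 : (-1 : ℤ) ^ (k + a - s - r) ≠ 0 := pow_ne_zero _ (by norm_num)
    have c1' : ((k - (k + a - s - r) + a).choose a : ℤ) ≠ 0 := by exact_mod_cast c1.ne'
    have c2' : ((b + (k + a - s - r)).choose b : ℤ) ≠ 0 := by exact_mod_cast c2.ne'
    have c3' : ((a + b).choose (k + a - s - (k + a - s - r)) : ℤ) ≠ 0 := by exact_mod_cast c3.ne'
    exact mul_ne_zero (mul_ne_zero (mul_ne_zero c4 c1') c2') c3'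
  · intro l hl h0
    have hl' : l ≤ k := by simpa [Nat.lt_succ_iff] using hl
    have h1 : l ≤ k + a - s := by
      by_contra hlt
      exact h0 (by rw [if_neg hlt, mul_zero])
    have h2 : k + a - s - l ≤ a + b := by
      by_contra hlt
      apply h0
      rw [Nat.choose_eq_zero_of_lt (by omega)]
      simp
    rw [if_pos h1, weightCoeff, show s + (k + a - s - l) = k - l + a by omega,
      show k - s + (a + b - (k + a - s - l)) = b + l by omega]
    have hsg : (-1 : ℤ) ^ (k + a - s) * (-1) ^ (k + a - s - l) = (-1) ^ l := by
      conv_lhs => rw [show (k + a - s) = l + (k + a - s - l) by omega]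
      rw [show l + (k + a - s - l) - l = k + a - s - l by omega, pow_add, mul_assoc, ← mul_pow]
      simp
    rw [← hsg]
    ring

/-- The coefficient of `X^m` in `(1+X)^N H²`. -/
lemma coeff_square (k a b : ℕ) :
    (weightPoly k a b * (weightPoly k a b * (1 + Polynomial.X) ^ (a + b))).coeff (k + a) =
      (-1) ^ k * (((a + b + k + 1).choose k : ℤ) * ((a + b).choose a : ℤ)) := by
  rw [coeff_weightPoly_mul, ← vandermonde_neg, Finset.sum_mul, Finset.mul_sum]
  refine Finset.sum_congr rfl fun l hl => ?_
  have hl' : l ≤ k := by simpa [Nat.lt_succ_iff] using hl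
  rw [if_pos (by omega), coeff_top k a b l hl', weightCoeff]
  have hsg : (-1 : ℤ) ^ k = (-1) ^ l * (-1) ^ (k - l) := by
    rw [← pow_add]
    congr 1
    omega
  rw [hsg]
  ring

lemma c_eq_zero (m n k i j : ℤ) (hk : 0 ≤ k) (hj : j < 0) : c m n k i j = 0 := by
  refine Finset.sum_eq_zero fun l hl => ?_
  rw [Finset.mem_range] at hl
  have : C (i + j - k) (i - l) = 0 := if_neg (by omega)
  rw [this]
  ring

theorem pairing_sum (m n k p : ℤ)
    (hm : 0 ≤ m) (hn : 0 ≤ n) (hk0 : 0 ≤ k) (hkm : k ≤ m) (hkn : k ≤ n)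
    (hkp : k ≤ p) (hp : p ≤ m + n - k) :
    ∑ i ∈ (Finset.Icc (0 : ℤ) m).filter (fun i => 0 ≤ p - i ∧ p - i ≤ n),
      c m n k i (p - i) * c m n k (m - i) (n - (p - i)) =
    (-1 : ℤ) ^ k.toNat * D m n k := by
  -- Outside the filter, one of the two factors has a negative second index and vanishes.
  rw [Finset.sum_filter_of_ne (by
    intro i _ h
    constructor
    · by_contra hlt
      exact h (by rw [c_eq_zero m n k i (p - i) hk0 (by omega), zero_mul])
    · by_contra hlt
      exact h (by rw [c_eq_zero m n k (m - i) _ hk0 (by omega), mul_zero]))]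
  lift k to ℕ using hk0
  obtain ⟨a, ha⟩ := Int.eq_ofNat_of_zero_le (sub_nonneg.2 hkm)
  obtain ⟨b, hb⟩ := Int.eq_ofNat_of_zero_le (sub_nonneg.2 hkn)
  obtain ⟨q, hq⟩ := Int.eq_ofNat_of_zero_le (sub_nonneg.2 hkp)
  obtain ⟨q', hq'⟩ := Int.eq_ofNat_of_zero_le (sub_nonneg.2 hp)
  have hqq : q + q' = a + b := by omega
  have hD : D m n k = ((a + b + k + 1).choose k : ℤ) * ((a + b).choose a : ℤ) := by
    rw [D, show m + n - k + 1 = ((a + b + k + 1 : ℕ) : ℤ) by push_cast; omega,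
      show m + n - 2 * k = ((a + b : ℕ) : ℤ) by push_cast; omega, ha, C_natCast, C_natCast]
  have hprod : weightPoly k a b * (weightPoly k a b * (1 + Polynomial.X) ^ (a + b)) =
      (weightPoly k a b * (1 + Polynomial.X) ^ q) *
        (weightPoly k a b * (1 + Polynomial.X) ^ q') := by
    rw [← hqq, pow_add]
    ring
  rw [hD, Int.toNat_natCast, ← coeff_square, hprod, Polynomial.coeff_mul,
    Finset.Nat.sum_antidiagonal_eq_sum_range_succ_mk]
  symm
  refine Finset.sum_bij (fun i _ => (i : ℤ)) ?_ ?_ ?_ ?_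
  · intro i hi
    rw [Finset.mem_range] at hi
    rw [Finset.mem_Icc]
    omega
  · intro i _ j _ h
    exact_mod_cast h
  · intro i hi
    rw [Finset.mem_Icc] at hi
    exact ⟨i.toNat, by rw [Finset.mem_range]; omega, by omega⟩
  · intro i hi
    rw [Finset.mem_range] at hi
    rw [c_eq_coeff k a b q i m n p (by omega) (by omega) (by omega),
      ← c_eq_coeff k a b q' (k + a - i) m n (m + n - p) (by omega) (by omega) (by omega),
      show ((k + a - i : ℕ) : ℤ) = m - i by omega,
      show m + n - p - (m - i) = n - (p - i) by ring]
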